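/- arXiv:1802.02225 — 2 statements merged into one kernel-verified Lean document; each statement's English description precedes it below -/
import Mathlib

section
/- Let (W,S) be a Coxeter system and let t_0, t_1, …, t_r be pairwise distinct elements of S such that t_i t_{i-1} ≠ t_{i-1} t_i for all i = 1, …, r. Let w ∈ W be such that t_0 t_1 ⋯ t_r ≤ w in the Bruhat order, and let s ∈ S with s ≠ t_0. Then t_r belongs to the support supp(s w) of the element s w. -/
/-- The Bruhat order on a Coxeter group, characterized by the subword property:
`v ≤ w` if and only if every reduced word for `w` contains a reduced word for `v`
as a subsequence. -/
def CoxeterSystem.bruhatLE {B : Type*} {W : Type*} [Group W] {M : CoxeterMatrix B}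
    (cs : CoxeterSystem M W) (v w : W) : Prop :=
  ∀ ω : List B, cs.IsReduced ω → cs.wordProd ω = w →
    ∃ ω' : List B, ω'.Sublist ω ∧ cs.IsReduced ω' ∧ cs.wordProd ω' = v

/-- The support of an element `w` of a Coxeter group: the set of simple reflections
(indexed by `B`) occurring in every (equivalently, some) reduced word for `w`. -/
def CoxeterSystem.support {B : Type*} {W : Type*} [Group W] {M : CoxeterMatrix B}
    (cs : CoxeterSystem M W) (w : W) : Set B :=
  {i : B | ∀ ω : List B, cs.IsReduced ω → cs.wordProd ω = w → i ∈ ω}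

/-!
The lifting property of the Bruhat order says that `x ≤ w` implies `x ≤ s w` whenever `s` is not a
left descent of `x`: a reduced word of `w` can be chosen inside `s` followed by a reduced word of
`s w`, and a reduced word of `x` found inside it cannot begin with `s`. Applied to
`x = t 0 * ⋯ * t r` it reduces the claim to two facts about words without repeated letters: every
letter lies in the support of the product, and a word whose consecutive letters do not commute has
its first letter as only left descent.

For the second fact, let `i ≠ a` be a left descent of `a * l`. The exchange condition moves `i` to
the front, `a * l = i * a * (l without i)`, and then `a` back to the front,
`a * l = a * i * (l without i)`. So `a` and `i` commute and `i` is a left descent of `l`; by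
induction `i` is the neighbour of `a`, a contradiction.
-/

namespace CoxeterChain

open CoxeterSystem

section Chebyshev

open Polynomial.Chebyshev Real

variable {θ : ℝ}

theorem eval_S_two_mul_cos_eq_zero (hθ : sin θ ≠ 0) {n : ℤ} (h : sin ((n + 1) * θ) = 0) :
    (S ℝ n).eval (2 * cos θ) = 0 :=
  (mul_eq_zero.1 ((S_two_mul_real_cos θ n).trans h)).resolve_right hθ

theorem eval_S_add_eval_S_two_mul_cos_eq_zero (hθ : sin θ ≠ 0) {m n : ℤ}
    (h : sin ((m + 1) * θ) + sin ((n + 1) * θ) = 0) :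
    (S ℝ m).eval (2 * cos θ) + (S ℝ n).eval (2 * cos θ) = 0 := by
  refine (mul_eq_zero.1 ?_).resolve_right hθ
  rw [add_mul, S_two_mul_real_cos, S_two_mul_real_cos, h]

variable {V : Type*} [AddCommGroup V] [Module ℝ V] {x y : V} {f g : Module.Dual ℝ V}

theorem reflection_mul_reflection_pow_eq_one (hf : f x = 2) (hg : g y = 2) {m : ℕ} (hm : 3 ≤ m)
    (hfg : f y * g x = 4 * cos (π / m) ^ 2) :
    (Module.reflection hf * Module.reflection hg) ^ m = 1 := by
  set θ : ℝ := 2 * π / m with hθ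
  have hm3 : (3 : ℝ) ≤ m := by exact_mod_cast hm
  have hm0 : (0 : ℝ) < m := by linarith
  have hmθ : m * θ = 2 * π := by rw [hθ]; field_simp
  have hsin : sin θ ≠ 0 := by
    have hθπ : θ < π := by rw [hθ, div_lt_iff₀ hm0]; nlinarith [pi_pos]
    exact (sin_pos_of_pos_of_lt_pi (by positivity) hθπ).ne'
  have ht : 2 * cos θ = f y * g x - 2 := by
    rw [hfg, hθ, mul_div_assoc, cos_two_mul]; ring
  ext z
  rw [Module.reflection_mul_reflection_pow_apply hf hg m z _ ht]
  obtain ⟨k, hk | hk⟩ := m.even_or_odd'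
  · have hS : (S ℝ (k - 1)).eval (2 * cos θ) = 0 := by
      refine eval_S_two_mul_cos_eq_zero hsin ?_
      have hkθ : (((k - 1 : ℤ) : ℝ) + 1) * θ = π := by
        rw [hk] at hmθ; push_cast at hmθ ⊢; linarith
      rw [hkθ, sin_pi]
    rw [show ((m : ℤ) - 2) / 2 = k - 1 by lia, show ((m : ℤ) - 1) / 2 = k - 1 by lia, hS]
    simp
  · have hS : (S ℝ k).eval (2 * cos θ) + (S ℝ (k - 1)).eval (2 * cos θ) = 0 := by
      refine eval_S_add_eval_S_two_mul_cos_eq_zero hsin ?_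
      have hkθ : (((k : ℤ) : ℝ) + 1) * θ = 2 * π - (((k - 1 : ℤ) : ℝ) + 1) * θ := by
        rw [← hmθ, hk]; push_cast; ring
      rw [hkθ, sin_two_pi_sub, neg_add_cancel]
    rw [show ((m : ℤ) - 2) / 2 = k - 1 by lia, show ((m : ℤ) - 1) / 2 = k by lia,
      show ((m : ℤ) - 3) / 2 = k - 1 by lia, show (m : ℤ) / 2 = k by lia, hS]
    simp

end Chebyshev

variable {B W : Type*} [Group W] {M : CoxeterMatrix B}

section GeometricRepresentation

/-- The entries `-2 cos (π / M i j)` of the Cartan matrix of the geometric representation. An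
infinite order is encoded as `M i j = 0`, where `π / 0 = 0` gives the intended value `-2`. -/
noncomputable def cartan (M : CoxeterMatrix B) (i j : B) : ℝ :=
  -2 * Real.cos (Real.pi / M i j)

/-- The simple coroot of index `i`, as a linear form on the space with basis the simple roots. -/
noncomputable def coroot (M : CoxeterMatrix B) (i : B) : Module.Dual ℝ (B →₀ ℝ) :=
  Finsupp.linearCombination ℝ (cartan M i)

/-- The simple root of index `i`. -/
noncomputable def root (i : B) : B →₀ ℝ := Finsupp.single i 1

theorem cartan_comm (i j : B) : cartan M i j = cartan M j i := by
  rw [cartan, M.symmetric, cartan]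

theorem cartan_self (i : B) : cartan M i i = 2 := by
  simp [cartan]

theorem coroot_root (i j : B) : coroot M i (root j) = cartan M i j := by
  simp [coroot, root]

theorem coroot_root_self (i : B) : coroot M i (root i) = 2 := by
  rw [coroot_root, cartan_self]

/-- The reflection by which the simple reflection of index `i` acts in the geometric
representation. -/
noncomputable def simpleReflection (M : CoxeterMatrix B) (i : B) : (B →₀ ℝ) ≃ₗ[ℝ] (B →₀ ℝ) :=
  Module.reflection (coroot_root_self (M := M) i)

theorem isLiftable_simpleReflection : M.IsLiftable (simpleReflection M) := by
  intro i j
  obtain rfl | hij := eq_or_ne i j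
  · rw [M.diagonal, pow_one]
    exact LinearEquiv.ext (Module.involutive_reflection (coroot_root_self (M := M) i))
  have hM1 : M i j ≠ 1 := M.off_diagonal i j hij
  obtain hM0 | hM2 | hM3 : M i j = 0 ∨ M i j = 2 ∨ 3 ≤ M i j := by lia
  · rw [hM0, pow_zero]
  · have hc : cartan M i j = 0 := by simp [cartan, hM2]
    have hc' : cartan M j i = 0 := by rw [cartan_comm, hc]
    refine LinearEquiv.ext fun v => ?_
    simp only [hM2, pow_two, simpleReflection, LinearEquiv.mul_apply, Module.reflection_apply,
      map_sub, map_smul, coroot_root, cartan_self, hc, hc', LinearEquiv.coe_one, id_eq]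
    module
  · refine reflection_mul_reflection_pow_eq_one _ _ hM3 ?_
    rw [coroot_root, coroot_root, cartan_comm j i, cartan]
    ring

variable (cs : CoxeterSystem M W)

/-- The geometric representation of a Coxeter group, on the space with basis the simple roots. It
separates a simple reflection from the products of the others. -/
noncomputable def geometricRep : W →* ((B →₀ ℝ) ≃ₗ[ℝ] (B →₀ ℝ)) :=
  cs.lift ⟨simpleReflection M, isLiftable_simpleReflection⟩

theorem geometricRep_simple_apply (i : B) (v : B →₀ ℝ) :
    geometricRep cs (cs.simple i) v = v - coroot M i v • root i := by
  rw [geometricRep, cs.lift_apply_simple, simpleReflection, Module.reflection_apply]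

theorem geometricRep_simple_root (i : B) :
    geometricRep cs (cs.simple i) (root i) = -root i := by
  rw [geometricRep, cs.lift_apply_simple, simpleReflection, Module.reflection_apply_self]

theorem geometricRep_wordProd_apply_of_notMem {b : B} {ω : List B} (hb : b ∉ ω) (v : B →₀ ℝ) :
    geometricRep cs (cs.wordProd ω) v b = v b := by
  induction ω with
  | nil => simp
  | cons i ω ih =>
    obtain ⟨hbi, hbω⟩ := not_or.1 (List.mem_cons.not.1 hb)
    rw [wordProd_cons, map_mul, LinearEquiv.mul_apply, geometricRep_simple_apply]
    simp [root, Finsupp.single_eq_of_ne hbi, ih hbω]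

theorem simple_ne_wordProd_of_notMem {b : B} {ω : List B} (hb : b ∉ ω) :
    cs.simple b ≠ cs.wordProd ω := by
  intro h
  have hroot := geometricRep_wordProd_apply_of_notMem cs hb (root b)
  rw [← h, geometricRep_simple_root] at hroot
  norm_num [root] at hroot

end GeometricRepresentation

variable (cs : CoxeterSystem M W)

section Exchange

open Classical in
/-- The action of the simple reflection of index `i` on pairs consisting of a group element and a
sign (in `ZMod 2`): the element is conjugated, and the sign changes exactly when the element is that
simple reflection. -/
noncomputable def signedConj (i : B) : Function.End (W × ZMod 2) :=
  fun x => (cs.simple i * x.1 * cs.simple i, x.2 + if x.1 = cs.simple i then 1 else 0)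

open Classical in
theorem prod_map_signedConj_reverse (ω : List B) (g : W) (e : ZMod 2) :
    (ω.reverse.map (signedConj cs)).prod (g, e) =
      ((cs.wordProd ω)⁻¹ * g * cs.wordProd ω, e + (cs.leftInvSeq ω).count g) := by
  induction ω using List.reverseRecOn with
  | nil => simp [Function.End.one_def]
  | append_singleton ω i ih =>
    have hconj : (cs.wordProd ω)⁻¹ * (g * cs.wordProd ω) = cs.simple i ↔
        cs.wordProd ω * (cs.simple i * (cs.wordProd ω)⁻¹) = g := by
      constructor <;> intro h <;> simp [← h, mul_assoc]
    rw [← List.concat_eq_append, leftInvSeq_concat, wordProd_concat, List.concat_eq_append,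
      List.concat_eq_append, List.reverse_append, List.map_append, List.prod_append]
    change ([i].reverse.map (signedConj cs)).prod ((ω.reverse.map (signedConj cs)).prod (g, e)) = _
    rw [ih]
    simp [signedConj, hconj, List.count_singleton, mul_assoc, add_assoc]

theorem leftInvSeq_alternatingWord (i j : B) (p : ℕ) :
    cs.leftInvSeq (alternatingWord i j (2 * p)) =
      (List.range (2 * p)).map fun k => cs.simple i * (cs.simple j * cs.simple i) ^ k := by
  refine List.ext_getElem (by simp) fun k hk _ => ?_
  rw [getElem_leftInvSeq_alternatingWord cs i j p k (by simpa using hk),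
    prod_alternatingWord_eq_mul_pow]
  simp [Nat.add_div]

theorem even_count_leftInvSeq_alternatingWord [DecidableEq W] (i j : B) (t : W) :
    Even ((cs.leftInvSeq (alternatingWord i j (2 * M i j))).count t) := by
  have hperiod (k : ℕ) : cs.simple i * (cs.simple j * cs.simple i) ^ (M i j + k) =
      cs.simple i * (cs.simple j * cs.simple i) ^ k := by
    rw [pow_add, simple_mul_simple_pow', one_mul]
  rw [leftInvSeq_alternatingWord, two_mul, List.range_add, List.map_append, List.map_map,
    List.count_append]
  simp only [Function.comp_def, hperiod]
  exact ⟨_, rfl⟩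

theorem prod_map_reverse_alternatingWord {G : Type*} [Monoid G] (f : B → G) (i j : B) (p : ℕ) :
    ((alternatingWord i j (2 * p)).reverse.map f).prod = (f j * f i) ^ p := by
  induction p with
  | zero => simp [alternatingWord]
  | succ p ih =>
    rw [List.map_reverse] at ih
    rw [mul_add_one, alternatingWord_succ, alternatingWord_succ]
    simp [ih, pow_succ', mul_assoc]

theorem isLiftable_signedConj : M.IsLiftable (signedConj cs) := by
  classical
  intro j i
  funext ⟨g, e⟩
  have heven := even_count_leftInvSeq_alternatingWord cs i j g
  rw [M.symmetric, ← prod_map_reverse_alternatingWord, prod_map_signedConj_reverse,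
    (ZMod.natCast_eq_zero_iff_even).2 heven, prod_alternatingWord_eq_mul_pow]
  simp [Function.End.one_def]

/-- The action of a Coxeter group on pairs of a group element and a sign; on the pair of a
reflection and a sign it records whether the reflection is an inversion, so that the parity of
multiplicities in inversion sequences depends only on the group element. -/
noncomputable def signedConjHom : W →* Function.End (W × ZMod 2) :=
  cs.lift ⟨signedConj cs, isLiftable_signedConj cs⟩

theorem signedConjHom_wordProd (ω : List B) :
    signedConjHom cs (cs.wordProd ω) = (ω.map (signedConj cs)).prod := by
  rw [wordProd, map_list_prod, List.map_map]
  congr 2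
  funext i
  exact cs.lift_apply_simple _ i

theorem natCast_count_leftInvSeq_eq [DecidableEq W] {ω ω' : List B}
    (h : cs.wordProd ω = cs.wordProd ω') (t : W) :
    ((cs.leftInvSeq ω).count t : ZMod 2) = (cs.leftInvSeq ω').count t := by
  have hparity (η : List B) :
      (signedConjHom cs (cs.wordProd η)⁻¹ (t, 0)).2 = (cs.leftInvSeq η).count t := by
    rw [← wordProd_reverse, signedConjHom_wordProd, prod_map_signedConj_reverse, zero_add]
    congr!
  rw [← hparity, ← hparity, h]

variable {cs} in
theorem isReduced_cons {i : B} {ω : List B} (hω : cs.IsReduced ω)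
    (hi : ¬cs.IsLeftDescent (cs.wordProd ω) i) : cs.IsReduced (i :: ω) := by
  rw [CoxeterSystem.IsReduced, wordProd_cons, cs.not_isLeftDescent_iff.1 hi, hω.eq,
    List.length_cons]

variable {cs} in
theorem isLeftDescent_of_isReduced_cons {i : B} {ω : List B} (h : cs.IsReduced (i :: ω)) :
    cs.IsLeftDescent (cs.wordProd (i :: ω)) i := by
  rw [IsLeftDescent, h.eq, wordProd_cons, simple_mul_simple_cancel_left, List.length_cons]
  exact Nat.lt_succ_of_le (cs.length_wordProd_le ω)

theorem simple_mem_leftInvSeq_of_isLeftDescent {ω : List B} {i : B}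
    (h : cs.IsLeftDescent (cs.wordProd ω) i) : cs.simple i ∈ cs.leftInvSeq ω := by
  classical
  obtain ⟨η, hη, hηω⟩ := cs.exists_isReduced (cs.simple i * cs.wordProd ω)
  have hprod : cs.wordProd ω = cs.wordProd (i :: η) := by
    rw [wordProd_cons, ← hηω, simple_mul_simple_cancel_left]
  have hred : cs.IsReduced (i :: η) :=
    isReduced_cons hη (hηω ▸ cs.isLeftDescent_iff_not_isLeftDescent_mul.1 h)
  have hcount : (cs.leftInvSeq (i :: η)).count (cs.simple i) = 1 :=
    List.count_eq_one_of_mem hred.nodup_leftInvSeq List.mem_cons_self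
  by_contra hmem
  have hparity := natCast_count_leftInvSeq_eq cs hprod (cs.simple i)
  rw [hcount, List.count_eq_zero_of_not_mem hmem] at hparity
  simp at hparity

theorem exists_wordProd_eraseIdx_eq_simple_mul {ω : List B} {i : B}
    (h : cs.IsLeftDescent (cs.wordProd ω) i) :
    ∃ j < ω.length, cs.wordProd (ω.eraseIdx j) = cs.simple i * cs.wordProd ω := by
  obtain ⟨j, hj, hji⟩ := List.getElem_of_mem (simple_mem_leftInvSeq_of_isLeftDescent cs h)
  refine ⟨j, by simpa using hj, ?_⟩
  rw [← getD_leftInvSeq_mul_wordProd, List.getD_eq_getElem _ _ hj, hji]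

theorem exists_isReduced_sublist (ω : List B) :
    ∃ η : List B, η.Sublist ω ∧ cs.IsReduced η ∧ cs.wordProd η = cs.wordProd ω := by
  induction ω with
  | nil => exact ⟨[], .refl _, by simp [CoxeterSystem.IsReduced], rfl⟩
  | cons i ω ih =>
    obtain ⟨η, hsub, hη, hprod⟩ := ih
    by_cases hi : cs.IsLeftDescent (cs.wordProd η) i
    · obtain ⟨j, hj, herase⟩ := exists_wordProd_eraseIdx_eq_simple_mul cs hi
      refine ⟨η.eraseIdx j, ((η.eraseIdx_sublist j).trans hsub).cons i, ?_, ?_⟩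
      · have hlen := cs.isLeftDescent_iff.1 hi
        rw [← herase, hη.eq, ← List.length_eraseIdx_add_one hj] at hlen
        exact Nat.succ_injective hlen
      · rw [herase, hprod, wordProd_cons]
    · exact ⟨i :: η, hsub.cons_cons i, isReduced_cons hη hi, by simp only [wordProd_cons, hprod]⟩

end Exchange

section Nodup

variable {cs} {ω ξ : List B}

theorem subset_of_wordProd_eq_of_nodup (hξ : ξ.Nodup) (h : cs.wordProd ω = cs.wordProd ξ) :
    ξ ⊆ ω := by
  intro b hb
  by_contra hbω
  obtain ⟨l₁, l₂, rfl⟩ := List.append_of_mem hb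
  obtain ⟨hb₁, hb₂⟩ : b ∉ l₁ ∧ b ∉ l₂ := by simpa using (List.nodup_middle.1 hξ).notMem
  refine simple_ne_wordProd_of_notMem cs (ω := l₁.reverse ++ ω ++ l₂.reverse) (b := b)
    (by simp [hb₁, hb₂, hbω]) ?_
  simp [wordProd_append, wordProd_cons, h, mul_assoc]

theorem isReduced_of_nodup (hξ : ξ.Nodup) : cs.IsReduced ξ := by
  obtain ⟨ω, hω, hωξ⟩ := cs.exists_isReduced (cs.wordProd ξ)
  refine (cs.length_wordProd_le ξ).antisymm ?_
  rw [hωξ, hω.eq]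
  exact (hξ.subperm (subset_of_wordProd_eq_of_nodup hξ hωξ.symm)).length_le

theorem wordProd_cons_erase_of_isLeftDescent [DecidableEq B] (hξ : ξ.Nodup) {i : B}
    (hi : cs.IsLeftDescent (cs.wordProd ξ) i) :
    i ∈ ξ ∧ cs.wordProd (i :: ξ.erase i) = cs.wordProd ξ := by
  obtain ⟨j, hj, herase⟩ := exists_wordProd_eraseIdx_eq_simple_mul cs hi
  rw [← hξ.erase_getElem j hj] at herase
  have hprod : cs.wordProd (i :: ξ.erase ξ[j]) = cs.wordProd ξ := by
    rw [wordProd_cons, herase, simple_mul_simple_cancel_left]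
  have hmem : ξ[j] ∈ i :: ξ.erase ξ[j] :=
    subset_of_wordProd_eq_of_nodup hξ hprod (List.getElem_mem hj)
  obtain rfl : ξ[j] = i := (List.mem_cons.1 hmem).resolve_right hξ.not_mem_erase
  exact ⟨List.getElem_mem hj, hprod⟩

theorem eq_head_of_isLeftDescent {a : B} {l : List B} (hnd : (a :: l).Nodup)
    (hch : (a :: l).IsChain fun i j => ¬Commute (cs.simple i) (cs.simple j)) {i : B}
    (hi : cs.IsLeftDescent (cs.wordProd (a :: l)) i) : i = a := by
  classical
  induction l generalizing a with
  | nil => simpa using (wordProd_cons_erase_of_isLeftDescent hnd hi).1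
  | cons c l ih =>
    by_contra hia
    obtain ⟨hi_mem, hi_front⟩ := wordProd_cons_erase_of_isLeftDescent hnd hi
    have hil : i ∈ c :: l := (List.mem_cons.1 hi_mem).resolve_left hia
    rw [List.erase_cons_tail (by simpa using Ne.symm hia)] at hi_front
    set m := (c :: l).erase i
    have hnd_im : (i :: m).Nodup := (List.perm_cons_erase hil).nodup_iff.1 hnd.of_cons
    have hnd_iam : (i :: a :: m).Nodup :=
      ((List.perm_cons_erase hil).cons a |>.trans (.swap i a m)).nodup_iff.1 hnd
    have ha : cs.IsLeftDescent (cs.wordProd (i :: a :: m)) a :=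
      hi_front ▸ isLeftDescent_of_isReduced_cons (isReduced_of_nodup hnd)
    have ha_front : cs.wordProd (a :: i :: m) = cs.wordProd (i :: a :: m) := by
      simpa [hia] using (wordProd_cons_erase_of_isLeftDescent hnd_iam ha).2
    have hcomm : cs.simple a * cs.simple i = cs.simple i * cs.simple a := by
      simpa [wordProd_cons, ← mul_assoc] using ha_front
    have htail : cs.wordProd (i :: m) = cs.wordProd (c :: l) := by
      simpa [wordProd_cons cs a] using ha_front.trans hi_front
    have hic : i = c := ih hnd.of_cons hch.tail
      (htail ▸ isLeftDescent_of_isReduced_cons (isReduced_of_nodup hnd_im))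
    exact (List.isChain_cons_cons.1 hch).1 (hic ▸ hcomm)

end Nodup

section Bruhat

variable {cs} {x w : W}

theorem bruhatLE_simple_mul_of_not_isLeftDescent (hxw : cs.bruhatLE x w) {s : B}
    (hs : ¬cs.IsLeftDescent x s) : cs.bruhatLE x (cs.simple s * w) := by
  intro ω _ hω
  obtain ⟨η, hηω, hη, hprod⟩ := exists_isReduced_sublist cs (s :: ω)
  have hηw : cs.wordProd η = w := by
    rw [hprod, wordProd_cons, hω, simple_mul_simple_cancel_left]
  obtain ⟨ξ, hξη, hξ, rfl⟩ := hxw η hη hηw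
  obtain hξω | ⟨ξ', rfl, -⟩ := List.sublist_cons_iff.1 (hξη.trans hηω)
  · exact ⟨ξ, hξω, hξ, rfl⟩
  · exact absurd (isLeftDescent_of_isReduced_cons hξ) hs

theorem support_subset_of_bruhatLE (hxw : cs.bruhatLE x w) : cs.support x ⊆ cs.support w := by
  intro i hi ω hω hωw
  obtain ⟨ξ, hξω, hξ, hξx⟩ := hxw ω hω hωw
  exact hξω.subset (hi ξ hξ hξx)

theorem mem_support_wordProd_of_nodup {ξ : List B} (hξ : ξ.Nodup) {i : B} (hi : i ∈ ξ) :
    i ∈ cs.support (cs.wordProd ξ) :=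
  fun _ _ hω => subset_of_wordProd_eq_of_nodup hξ hω hi

end Bruhat

end CoxeterChain

/-- Let `t 0, …, t r` be pairwise distinct simple reflections such that
consecutive ones do not commute, let `w` satisfy `t 0 * ⋯ * t r ≤ w` in the Bruhat
order, and let `s` be a simple reflection different from `t 0`. Then `t r` belongs to
the support of `s * w`. -/
theorem last_of_chain_mem_support_mul_simple
    {B : Type*} {W : Type*} [Group W] {M : CoxeterMatrix B} (cs : CoxeterSystem M W)
    (r : ℕ) (t : Fin (r + 1) → B)
    (hdist : Function.Injective fun i => cs.simple (t i))
    (hnc : ∀ i : Fin r,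
      cs.simple (t i.succ) * cs.simple (t i.castSucc) ≠
        cs.simple (t i.castSucc) * cs.simple (t i.succ))
    (w : W) (hle : cs.bruhatLE (cs.wordProd (List.ofFn t)) w)
    (s : B) (hs : cs.simple s ≠ cs.simple (t 0)) :
    t (Fin.last r) ∈ cs.support (cs.simple s * w) := by
  have hnodup : (List.ofFn t).Nodup :=
    List.nodup_ofFn.2 (Function.Injective.of_comp (f := cs.simple) hdist)
  have hchain : (List.ofFn t).IsChain fun i j => ¬Commute (cs.simple i) (cs.simple j) :=
    List.isChain_ofFn.2 fun i hi hcomm => hnc ⟨i, by lia⟩ hcomm.symm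
  have hdesc : ¬cs.IsLeftDescent (cs.wordProd (List.ofFn t)) s := by
    rw [List.ofFn_succ] at hnodup hchain ⊢
    exact fun h => hs (congrArg cs.simple (CoxeterChain.eq_head_of_isLeftDescent hnodup hchain h))
  have hle' : cs.bruhatLE (cs.wordProd (List.ofFn t)) (cs.simple s * w) :=
    CoxeterChain.bruhatLE_simple_mul_of_not_isLeftDescent hle hdesc
  exact CoxeterChain.support_subset_of_bruhatLE hle'
    (CoxeterChain.mem_support_wordProd_of_nodup hnodup (List.mem_ofFn.2 ⟨_, rfl⟩))
end

section
/- Let p be a prime, let k be an algebraically closed field of characteristic p, and let σ: k^n → k^n be the coordinatewise Frobenius (a_1, …, a_n) ↦ (a_1^p, …, a_n^p). Let a = (a_1, …, a_n) ∈ k^n be a vector whose coordinates a_1, …, a_n are linearly independent over 𝔽_p, and for 1 ≤ i ≤ n set F_i = span_k(σ(a), σ^2(a), …, σ^i(a)). Then for all 1 ≤ i ≤ n and 1 ≤ j ≤ n, the intersection of F_i with the coordinate subspace span_k(e_1, …, e_j) has dimension max(0, i + j − n), where e_1, …, e_n is the standard basis of k^n. -/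
/-!
Let `σ` be the coordinatewise `q`-power Frobenius. A relation `∑ c m • σ^m b = 0` says that the
additive polynomial `∑ c m X^(q^m)` vanishes at every coordinate of `b`, hence on the `𝔽_q`-span of
the coordinates. If these are independent over `𝔽_q`, the span has too many elements for a nonzero
polynomial of that degree. So the Frobenius powers of a vector with independent coordinates span a
space of the largest possible dimension, and this persists when some coordinates are discarded.
The projection away from a coordinate subspace therefore has maximal rank on the span of the
Frobenius powers, and the intersection is the kernel of this projection, so rank-nullity gives its
dimension.
-/

open Polynomial Module

lemma span_range_single_eq_ker_funLeft {R ι κ : Type*} [Semiring R] [Finite ι] [DecidableEq ι]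
    (f : κ → ι) :
    Submodule.span R (Set.range fun l ↦ Pi.single (f l) (1 : R)) =
      LinearMap.ker (LinearMap.funLeft R R ((↑) : ↥(Set.range f)ᶜ → ι)) := by
  have range_eq : (Set.range fun l ↦ Pi.single (f l) (1 : R)) =
      Pi.basisFun R ι '' Set.range f := by
    rw [← Set.range_comp]
    congr! 2 with l
    exact (Pi.basisFun_apply R ι (f l)).symm
  ext x
  rw [range_eq, Basis.mem_span_image, LinearMap.mem_ker, funext_iff]
  simp only [Set.subset_def, Finset.mem_coe, Finsupp.mem_support_iff, Pi.basisFun_repr,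
    LinearMap.funLeft_apply, Pi.zero_apply, Subtype.forall, Set.mem_compl_iff, not_imp_comm]

lemma finrank_map_add_finrank_inf_ker {K V W : Type*} [DivisionRing K] [AddCommGroup V]
    [Module K V] [AddCommGroup W] [Module K W] (f : V →ₗ[K] W) (U : Submodule K V)
    [FiniteDimensional K U] :
    finrank K (U.map f) + finrank K ↥(U ⊓ LinearMap.ker f) = finrank K U := by
  rw [← LinearMap.range_domRestrict, ← (f.domRestrict U).finrank_range_add_finrank_ker,
    LinearMap.ker_domRestrict, ← Submodule.map_comap_subtype, Submodule.finrank_map_subtype_eq]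

section LinearizedPolynomial

variable {R : Type*} [Semiring R] {q n : ℕ}

/-- The `q`-linearized (additive) polynomial `c₀ X + c₁ X^q + ⋯ + c_{n-1} X^(q^(n-1))`, whose
vanishing at a point expresses a linear relation between the Frobenius powers of that point. -/
noncomputable def linearizedPolynomial (q : ℕ) (c : Fin n → R) : R[X] :=
  ∑ m : Fin n, monomial (q ^ (m : ℕ)) (c m)

lemma eval_linearizedPolynomial (c : Fin n → R) (x : R) :
    (linearizedPolynomial q c).eval x = ∑ m, c m * x ^ q ^ (m : ℕ) := by
  simp [linearizedPolynomial, eval_finsetSum]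

lemma coeff_linearizedPolynomial (hq : 1 < q) (c : Fin n → R) (m : Fin n) :
    (linearizedPolynomial q c).coeff (q ^ (m : ℕ)) = c m := by
  simp [linearizedPolynomial, coeff_monomial, (Nat.pow_right_injective hq).eq_iff, Fin.val_inj]

lemma natDegree_linearizedPolynomial_lt (hq : 1 < q) (c : Fin n → R) :
    (linearizedPolynomial q c).natDegree < q ^ n := by
  refine Nat.lt_of_le_pred (by positivity) (natDegree_sum_le_of_forall_le _ _ fun m _ ↦ ?_)
  exact (natDegree_monomial_le _).trans (Nat.le_pred_of_lt (Nat.pow_lt_pow_right hq m.isLt))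

end LinearizedPolynomial

section FrobeniusPowers

variable {F K ι : Type*} [Field F] [Fintype F]

lemma eval_linearizedPolynomial_eq_zero_of_mem_span [CommRing K] [Algebra F K] {n : ℕ}
    {c : Fin n → K} {s : Set K}
    (hs : ∀ x ∈ s, (linearizedPolynomial (Fintype.card F) c).eval x = 0)
    {x : K} (hx : x ∈ Submodule.span F s) :
    (linearizedPolynomial (Fintype.card F) c).eval x = 0 := by
  let φ : K →ₗ[F] K := ∑ m : Fin n,
    LinearMap.mulLeft F (c m) ∘ₗ (FiniteField.frobeniusAlgHom F K ^ (m : ℕ)).toLinearMap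
  have hφ (y : K) : φ y = (linearizedPolynomial (Fintype.card F) c).eval y := by
    simp [φ, eval_linearizedPolynomial, FiniteField.coe_frobeniusAlgHom, pow_iterate]
  have hle : Submodule.span F s ≤ LinearMap.ker φ :=
    Submodule.span_le.2 fun y hy ↦ (hφ y).trans (hs y hy)
  exact (hφ x).symm.trans (hle hx)

theorem linearIndependent_frobenius_pow [CommRing K] [IsDomain K] [Algebra F K] [Fintype ι]
    {b : ι → K} (hb : LinearIndependent F b) {n : ℕ} (hn : n ≤ Fintype.card ι) :
    LinearIndependent K fun (m : Fin n) (l : ι) ↦ b l ^ Fintype.card F ^ (m : ℕ) := by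
  have hq : 1 < Fintype.card F := Fintype.one_lt_card
  rw [Fintype.linearIndependent_iff]
  intro c hc
  have eval_b (l : ι) : (linearizedPolynomial (Fintype.card F) c).eval (b l) = 0 := by
    simpa [eval_linearizedPolynomial] using congrFun hc l
  let V := Submodule.span F (Set.range b)
  have : Module.Finite F V := .span_of_finite F (Set.finite_range b)
  have : Finite V := Module.finite_of_finite F
  have : Fintype V := Fintype.ofFinite V
  have card_V : Fintype.card V = Fintype.card F ^ Fintype.card ι := by
    rw [Module.card_eq_pow_finrank (K := F), finrank_span_eq_card hb]
  have poly_eq_zero : linearizedPolynomial (Fintype.card F) c = 0 := by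
    refine eq_zero_of_natDegree_lt_card_of_eval_eq_zero _ (f := ((↑) : V → K))
      Subtype.val_injective (fun x ↦ ?_) ?_
    · exact eval_linearizedPolynomial_eq_zero_of_mem_span (Set.forall_mem_range.2 eval_b) x.2
    · calc (linearizedPolynomial (Fintype.card F) c).natDegree
        _ < Fintype.card F ^ n := natDegree_linearizedPolynomial_lt hq c
        _ ≤ Fintype.card F ^ Fintype.card ι := Nat.pow_le_pow_right hq.le hn
        _ = Fintype.card V := card_V.symm
  intro m
  rw [← coeff_linearizedPolynomial hq c m, poly_eq_zero, coeff_zero]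

end FrobeniusPowers

section FrobeniusSpan

variable {K ι : Type*}

/-- The subspace `F_i = span (σ a, σ² a, …, σ^i a)` of `K^ι`, where `σ` is the coordinatewise
`q`-th power map; as `m : Fin i` starts at `0`, the exponents are shifted by one. -/
def frobeniusSpan [Semiring K] (q : ℕ) (a : ι → K) (i : ℕ) : Submodule K (ι → K) :=
  Submodule.span K (Set.range fun (m : Fin i) (l : ι) ↦ a l ^ q ^ ((m : ℕ) + 1))

lemma frobeniusSpan_mono [Semiring K] (q : ℕ) (a : ι → K) : Monotone (frobeniusSpan q a) :=
  fun _ _ h ↦ Submodule.span_mono (Set.range_subset_iff.2 fun m ↦ ⟨Fin.castLE h m, rfl⟩)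

lemma map_funLeft_frobeniusSpan [Semiring K] {κ : Type*} (f : κ → ι) (q : ℕ) (a : ι → K) (i : ℕ) :
    (frobeniusSpan q a i).map (LinearMap.funLeft K K f) = frobeniusSpan q (a ∘ f) i := by
  rw [frobeniusSpan, Submodule.map_span, ← Set.range_comp]
  rfl

variable {F : Type*} [Field F] [Fintype F] [Field K] [Algebra F K] [Fintype ι] {a : ι → K}

lemma finrank_frobeniusSpan_of_le_card (ha : LinearIndependent F a) {i : ℕ}
    (hi : i ≤ Fintype.card ι) : finrank K (frobeniusSpan (Fintype.card F) a i) = i := by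
  have hσa : LinearIndependent F fun l ↦ a l ^ Fintype.card F :=
    ha.map' (FiniteField.frobeniusAlgHom F K).toLinearMap
      (LinearMap.ker_eq_bot.2 (FiniteField.frobeniusAlgHom F K).injective)
  have h := linearIndependent_frobenius_pow hσa hi
  simp only [← pow_mul, ← pow_succ'] at h
  rw [frobeniusSpan, finrank_span_eq_card h, Fintype.card_fin]

theorem finrank_frobeniusSpan (ha : LinearIndependent F a) (i : ℕ) :
    finrank K (frobeniusSpan (Fintype.card F) a i) = min i (Fintype.card ι) := by
  obtain hi | hi := le_total i (Fintype.card ι)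
  · rw [finrank_frobeniusSpan_of_le_card ha hi, min_eq_left hi]
  · have eq_top : frobeniusSpan (Fintype.card F) a i = ⊤ := by
      refine eq_top_mono (frobeniusSpan_mono _ a hi) (Submodule.eq_top_of_finrank_eq ?_)
      rw [finrank_frobeniusSpan_of_le_card ha le_rfl, finrank_fintype_fun_eq_card]
    rw [eq_top, finrank_top, finrank_fintype_fun_eq_card, min_eq_right hi]

end FrobeniusSpan

theorem dim_inter_frobenius_span_coordinate_subspace_general {F K ι κ : Type*} [Field F]
    [Fintype F] [Field K] [Algebra F K] [Fintype ι] [DecidableEq ι] [Fintype κ] {a : ι → K}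
    (ha : LinearIndependent F a) {i : ℕ} (hi : i ≤ Fintype.card ι) {f : κ → ι}
    (hf : Function.Injective f) :
    finrank K ↥(frobeniusSpan (Fintype.card F) a i ⊓
        Submodule.span K (Set.range fun l ↦ Pi.single (f l) (1 : K))) =
      i + Fintype.card κ - Fintype.card ι := by
  classical
  let π : (ι → K) →ₗ[K] (↥(Set.range f)ᶜ → K) := LinearMap.funLeft K K (↑)
  have card_compl : Fintype.card ↥(Set.range f)ᶜ = Fintype.card ι - Fintype.card κ := by
    rw [Fintype.card_compl_set, Set.card_range_of_injective hf]
  have finrank_map : finrank K ((frobeniusSpan (Fintype.card F) a i).map π) =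
      min i (Fintype.card ι - Fintype.card κ) := by
    rw [map_funLeft_frobeniusSpan, finrank_frobeniusSpan (ha.comp _ Subtype.val_injective),
      card_compl]
  have rank_nullity := finrank_map_add_finrank_inf_ker π (frobeniusSpan (Fintype.card F) a i)
  rw [finrank_map, finrank_frobeniusSpan_of_le_card ha hi,
    ← span_range_single_eq_ker_funLeft f] at rank_nullity
  have card_le : Fintype.card κ ≤ Fintype.card ι := Fintype.card_le_of_injective f hf
  omega

/-- Let `p` be a prime, `k` an algebraically closed field of
characteristic `p`, and `σ` the coordinatewise Frobenius on `k^n`. Let `a ∈ k^n` have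
coordinates linearly independent over `𝔽_p`, and for `1 ≤ i ≤ n` let
`F i = span_k (σ a, σ² a, …, σ^i a)`. Then for all `1 ≤ i ≤ n` and `1 ≤ j ≤ n`, the
intersection of `F i` with the coordinate subspace `span_k (e 1, …, e j)` has
dimension `max 0 (i + j - n)`. -/
theorem dim_inter_frobenius_span_coordinate_subspace
    (p : ℕ) [Fact p.Prime] (k : Type*) [Field k] [IsAlgClosed k] [CharP k p]
    [Algebra (ZMod p) k]
    (n : ℕ) (a : Fin n → k) (ha : LinearIndependent (ZMod p) a)
    (i j : ℕ) (hi1 : 1 ≤ i) (hin : i ≤ n) (hj1 : 1 ≤ j) (hjn : j ≤ n) :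
    (Module.finrank k
        ↥(Submodule.span k
            (Set.range fun m : Fin i => (fun l : Fin n => a l ^ p ^ ((m : ℕ) + 1) : Fin n → k)) ⊓
          Submodule.span k
            (Set.range fun l : Fin j => Pi.single (Fin.castLE hjn l) (1 : k))) : ℤ) =
      max 0 ((i : ℤ) + (j : ℤ) - (n : ℤ)) := by
  have h := dim_inter_frobenius_span_coordinate_subspace_general ha (by simpa using hin)
    (Fin.castLE_injective hjn)
  rw [frobeniusSpan, ZMod.card, Fintype.card_fin, Fintype.card_fin] at h
  omega
end
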